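/- Exact bandwidth-adaptive repair: Let F be a field, μ ≥ 1, z ≥ 1, n ≥ 1, with pairwise distinct nonzero elements e_1, …, e_n of F. Let m ≥ 1 divide z, set d = (m+1)μ and β = z/m, let f ∈ {1, …, n} be a failed node index, and let H ⊆ {1, …, n} \ {f} be any set of d helper indices. Suppose (S_1, …, S_{2z}) and (S′_1, …, S′_{2z}) are two families of symmetric μ × μ matrices over F, with data matrices M and M′, such that all repair symbols agree: r_i(h, f) = r′_i(h, f) for every h ∈ H and every 1 ≤ i ≤ β (where r′ denotes the repair symbols computed from M′). Then ψ_f M = ψ_f M′. In other words, the content x_f of the failed node is uniquely determined by the β = α/(d−μ) repair symbols received from each of the d helpers. -/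

import Mathlib

open Matrix Finset

section ProductMatrixBAMSR

variable {F : Type*} [Field F]

/-- The data matrix `M` of the bandwidth adaptive product-matrix MSR code:
a `((z+1)μ) × (zμ)` matrix built from a (1-indexed) family `S 1, …, S (2z)` of `μ × μ`
matrices, with `μ × μ` blocks `B(t,t) = S (2t-1)` for `1 ≤ t ≤ z`,
`B(t,t+1) = S (2t)` for `1 ≤ t ≤ z-1`, `B(t+1,t) = S (2t)` for `1 ≤ t ≤ z`, and all
other blocks zero. -/
def dataMatrix (z μ : ℕ) (hμ : 0 < μ) (S : ℕ → Matrix (Fin μ) (Fin μ) F) :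
    Matrix (Fin ((z + 1) * μ)) (Fin (z * μ)) F :=
  Matrix.of fun r c =>
    if r.val / μ = c.val / μ then
      S (2 * (c.val / μ) + 1) ⟨r.val % μ, Nat.mod_lt _ hμ⟩ ⟨c.val % μ, Nat.mod_lt _ hμ⟩
    else if r.val / μ + 1 = c.val / μ then
      S (2 * (r.val / μ) + 2) ⟨r.val % μ, Nat.mod_lt _ hμ⟩ ⟨c.val % μ, Nat.mod_lt _ hμ⟩
    else if r.val / μ = c.val / μ + 1 then
      S (2 * (c.val / μ) + 2) ⟨r.val % μ, Nat.mod_lt _ hμ⟩ ⟨c.val % μ, Nat.mod_lt _ hμ⟩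
    else 0

/-- Coefficient (row) vector of a node with evaluation point `e`:
`ψ = (e, e², …, e^{(z+1)μ})`. -/
def psiVec (z μ : ℕ) (e : F) : Fin ((z + 1) * μ) → F := fun r => e ^ (r.val + 1)

/-- Stored content of a node with evaluation point `e`: the row vector `x = ψ M`
of length `α = zμ`. -/
def stored (z μ : ℕ) (hμ : 0 < μ) (S : ℕ → Matrix (Fin μ) (Fin μ) F) (e : F) :
    Fin (z * μ) → F :=
  Matrix.vecMul (psiVec z μ e) (dataMatrix z μ hμ S)

/-- The row vector `φ = (e, e², …, e^μ)`. -/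
def phiVec (μ : ℕ) (e : F) : Fin μ → F := fun a => e ^ (a.val + 1)

/-- The `i`-th (1-indexed) length-`mμ` segment of the coefficient vector `ψ`:
`ψ(i) = (e^{(i-1)mμ+1}, …, e^{imμ})`. -/
def psiSeg (m μ i : ℕ) (e : F) : Fin (m * μ) → F :=
  fun a => e ^ ((i - 1) * (m * μ) + a.val + 1)

lemma seg_bound {z μ m i : ℕ} (hμ : 0 < μ) (hm : 0 < m) (hi1 : 1 ≤ i)
    (hiz : i ≤ z / m) (hdvd : m ∣ z) {a : ℕ} (ha : a < m * μ) :
    (i - 1) * (m * μ) + a < z * μ := by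
  obtain ⟨t, rfl⟩ := hdvd
  rw [Nat.mul_div_cancel_left t hm] at hiz
  obtain ⟨i', rfl⟩ := Nat.exists_eq_add_of_le hi1
  have h2 : (1 + i' - 1) * (m * μ) + m * μ = (1 + i') * (m * μ) := by
    have : 1 + i' - 1 = i' := by omega
    rw [this]; ring
  have h3 : (1 + i') * (m * μ) ≤ m * t * μ := by
    have hit : (1 + i') * m ≤ m * t := by nlinarith
    calc (1 + i') * (m * μ) = (1 + i') * m * μ := by ring
      _ ≤ m * t * μ := Nat.mul_le_mul_right _ hit
  omega

/-- The `i`-th (1-indexed) length-`mμ` segment of the stored content `x = ψ M`. -/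
def xSeg (z μ m i : ℕ) (hμ : 0 < μ) (hm : 0 < m) (hi1 : 1 ≤ i) (hiz : i ≤ z / m)
    (hdvd : m ∣ z) (S : ℕ → Matrix (Fin μ) (Fin μ) F) (e : F) : Fin (m * μ) → F :=
  fun a => stored z μ hμ S e ⟨(i - 1) * (m * μ) + a.val, seg_bound hμ hm hi1 hiz hdvd a.isLt⟩

/-- The repair symbol `r_i(h, f) = x_h(i) · (ψ_f(i))ᵀ` sent by a helper with evaluation
point `eh` for a failed node with evaluation point `ef`. -/
def repairSym (z μ m i : ℕ) (hμ : 0 < μ) (hm : 0 < m) (hi1 : 1 ≤ i) (hiz : i ≤ z / m)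
    (hdvd : m ∣ z) (S : ℕ → Matrix (Fin μ) (Fin μ) F) (eh ef : F) : F :=
  ∑ a, xSeg z μ m i hμ hm hi1 hiz hdvd S eh a * psiSeg m μ i ef a

/-- The `i`-th (1-indexed) diagonal `mμ × mμ` submatrix `M_i` of the data matrix,
consisting of rows and columns `(i-1)mμ+1, …, imμ`. -/
def subM (z μ m i : ℕ) (hμ : 0 < μ) (hm : 0 < m) (hi1 : 1 ≤ i) (hiz : i ≤ z / m)
    (hdvd : m ∣ z) (S : ℕ → Matrix (Fin μ) (Fin μ) F) :
    Matrix (Fin (m * μ)) (Fin (m * μ)) F :=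
  Matrix.of fun a b =>
    dataMatrix z μ hμ S
      ⟨(i - 1) * (m * μ) + a.val,
        lt_of_lt_of_le (seg_bound hμ hm hi1 hiz hdvd a.isLt)
          (Nat.mul_le_mul_right _ (Nat.le_succ z))⟩
      ⟨(i - 1) * (m * μ) + b.val, seg_bound hμ hm hi1 hiz hdvd b.isLt⟩

/-- The `d × d` matrix `Ω_H(i)` (with `d = (m+1)μ`) whose row for helper `ℓ r` is
`(e_{ℓ r}^{(i-1)mμ+1}, …, e_{ℓ r}^{(i-1)mμ+d})`, i.e. `[ψ_{ℓ r}(i), e_{ℓ r}^{imμ} φ_{ℓ r}]`. -/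
def OmegaMat (n μ m i : ℕ) (e : Fin n → F) (ℓ : Fin ((m + 1) * μ) → Fin n) :
    Matrix (Fin ((m + 1) * μ)) (Fin ((m + 1) * μ)) F :=
  Matrix.of fun r c => e (ℓ r) ^ ((i - 1) * (m * μ) + c.val + 1)

lemma nmat_aux1 {m μ r : ℕ} (h : r < (m + 1) * μ) (h2 : ¬ r < m * μ) : r - m * μ < μ := by
  have hh : (m + 1) * μ = m * μ + μ := by ring
  omega

lemma nmat_aux2 {m μ c : ℕ} (hm : 0 < m) (h : c < m * μ) (h2 : (m - 1) * μ ≤ c) :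
    c - (m - 1) * μ < μ := by
  have h3 : (m - 1) * μ + μ = m * μ := by
    cases m with
    | zero => omega
    | succ k => rw [Nat.succ_sub_one, Nat.succ_mul]
  omega

/-- The `d × mμ` matrix `N_i` whose top `mμ` rows form the matrix `Mi` and whose bottom
`μ` rows form the block row `[O, …, O, S₂]` of `m-1` zero `μ × μ` blocks followed by `S₂`. -/
def Nmat (μ m : ℕ) (hm : 0 < m) (Mi : Matrix (Fin (m * μ)) (Fin (m * μ)) F)
    (S2 : Matrix (Fin μ) (Fin μ) F) : Matrix (Fin ((m + 1) * μ)) (Fin (m * μ)) F :=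
  Matrix.of fun r c =>
    if h : r.val < m * μ then Mi ⟨r.val, h⟩ c
    else if h2 : (m - 1) * μ ≤ c.val then
      S2 ⟨r.val - m * μ, nmat_aux1 r.isLt h⟩ ⟨c.val - (m - 1) * μ, nmat_aux2 hm c.isLt h2⟩
    else 0

/-- The top `(d-μ) × d = mμ × d` submatrix `Θ` of a `d × d` matrix (`d = (m+1)μ`). -/
def ThetaMat (μ m : ℕ) (A : Matrix (Fin ((m + 1) * μ)) (Fin ((m + 1) * μ)) F) :
    Matrix (Fin (m * μ)) (Fin ((m + 1) * μ)) F :=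
  Matrix.of fun r c =>
    A ⟨r.val, lt_of_lt_of_le r.isLt (Nat.mul_le_mul_right _ (Nat.le_succ m))⟩ c

/-- The bottom `μ × d` submatrix `Ξ` of a `d × d` matrix (`d = (m+1)μ`). -/
def XiMat (μ m : ℕ) (A : Matrix (Fin ((m + 1) * μ)) (Fin ((m + 1) * μ)) F) :
    Matrix (Fin μ) (Fin ((m + 1) * μ)) F :=
  Matrix.of fun r c =>
    A ⟨m * μ + r.val, by
      have hh : (m + 1) * μ = m * μ + μ := by ring
      have hr := r.isLt
      omega⟩ c

end ProductMatrixBAMSR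


section Helpers
variable {F : Type*} [Field F]

def GG (μ : ℕ) (hμ : 0 < μ) (D : ℕ → Matrix (Fin μ) (Fin μ) F) (r c : ℕ) : F :=
  if r / μ = c / μ then
    D (2 * (c / μ) + 1) ⟨r % μ, Nat.mod_lt _ hμ⟩ ⟨c % μ, Nat.mod_lt _ hμ⟩
  else if r / μ + 1 = c / μ then
    D (2 * (r / μ) + 2) ⟨r % μ, Nat.mod_lt _ hμ⟩ ⟨c % μ, Nat.mod_lt _ hμ⟩
  else if r / μ = c / μ + 1 then
    D (2 * (c / μ) + 2) ⟨r % μ, Nat.mod_lt _ hμ⟩ ⟨c % μ, Nat.mod_lt _ hμ⟩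
  else 0

lemma GG_symm (μ : ℕ) (hμ : 0 < μ) (D : ℕ → Matrix (Fin μ) (Fin μ) F)
    (hD : ∀ t, (D t).IsSymm) (r c : ℕ) : GG μ hμ D r c = GG μ hμ D c r := by
  unfold GG
  split_ifs with h1 h2 h3 h4 h5 h6 h7 h8 h9 <;> first | omega | rfl | skip
  · rw [h1]; exact (hD _).apply _ _
  all_goals exact (hD _).apply _ _

lemma GG_zero (μ : ℕ) (hμ : 0 < μ) (D : ℕ → Matrix (Fin μ) (Fin μ) F) (q r c : ℕ)
    (hr : r < q * μ) (hc : (q + 1) * μ ≤ c) : GG μ hμ D r c = 0 := by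
  have h1 : r / μ < q := (Nat.div_lt_iff_lt_mul hμ).2 hr
  have h2 : q + 1 ≤ c / μ := (Nat.le_div_iff_mul_le hμ).2 hc
  unfold GG
  rw [if_neg (by omega), if_neg (by omega), if_neg (by omega)]

lemma GG_zero' (μ : ℕ) (hμ : 0 < μ) (D : ℕ → Matrix (Fin μ) (Fin μ) F) (q r c : ℕ)
    (hr : c < q * μ) (hc : (q + 1) * μ ≤ r) : GG μ hμ D r c = 0 := by
  have h1 : c / μ < q := (Nat.div_lt_iff_lt_mul hμ).2 hr
  have h2 : q + 1 ≤ r / μ := (Nat.le_div_iff_mul_le hμ).2 hc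
  unfold GG
  rw [if_neg (by omega), if_neg (by omega), if_neg (by omega)]

lemma GG_shift (μ : ℕ) (hμ : 0 < μ) (D : ℕ → Matrix (Fin μ) (Fin μ) F) (r c : ℕ)
    (h : r / μ = c / μ) : GG μ hμ D r (c + μ) = GG μ hμ D (r + μ) c := by
  unfold GG
  simp [Nat.add_div_right _ hμ, h]
  intro h; omega

def PP (μ : ℕ) (hμ : 0 < μ) (D : ℕ → Matrix (Fin μ) (Fin μ) F) (x : F) (r a L : ℕ) : F :=
  ∑ j ∈ Finset.range L, GG μ hμ D r (a + j) * x ^ (a + j + 1)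

lemma PP_add (μ : ℕ) (hμ : 0 < μ) (D : ℕ → Matrix (Fin μ) (Fin μ) F) (x : F) (r a L L' : ℕ) :
    PP μ hμ D x r a (L + L') = PP μ hμ D x r a L + PP μ hμ D x r (a + L) L' := by
  unfold PP
  rw [Finset.sum_range_add]
  simp only [add_assoc]

lemma PP_zero (μ : ℕ) (hμ : 0 < μ) (D : ℕ → Matrix (Fin μ) (Fin μ) F) (x : F) (r a L : ℕ)
    (h : ∀ j < L, GG μ hμ D r (a + j) = 0) : PP μ hμ D x r a L = 0 := by
  unfold PP
  apply Finset.sum_eq_zero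
  intro j hj
  rw [h j (Finset.mem_range.1 hj), zero_mul]

lemma PP_next (μ : ℕ) (hμ : 0 < μ) (D : ℕ → Matrix (Fin μ) (Fin μ) F) (x : F) (a L q : ℕ)
    (hq : a + L = q * μ + μ) (hL : μ ≤ L) (h : ∀ r, PP μ hμ D x r a L = 0) (c : ℕ)
    (hc : c < q * μ + μ) : PP μ hμ D x c (q * μ + μ) μ = 0 := by
  by_cases hc' : c < q * μ
  · apply PP_zero
    intro j hj
    apply GG_zero μ hμ D q _ _ hc'
    rw [Nat.succ_mul]; omega
  · have hcq : c / μ = q := by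
      rw [Nat.div_eq_iff hμ]
      rw [Nat.mul_comm] at *
      omega
    have h1 := h (c + μ)
    obtain ⟨L', rfl⟩ := Nat.exists_eq_add_of_le' hL
    have haL : a + L' = q * μ := by omega
    rw [PP_add, haL, PP_zero μ hμ D x (c + μ) a L', zero_add] at h1
    · have : PP μ hμ D x c (q * μ + μ) μ = x ^ μ * PP μ hμ D x (c + μ) (q * μ) μ := by
        unfold PP
        rw [Finset.mul_sum]
        apply Finset.sum_congr rfl
        intro j hj
        have hj := Finset.mem_range.1 hj
        rw [show q * μ + μ + j = (q * μ + j) + μ by ring, GG_shift]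
        · ring
        · rw [hcq, Nat.add_comm, Nat.add_mul_div_right _ _ hμ, Nat.div_eq_of_lt hj, Nat.zero_add]
      rw [this, h1, mul_zero]
    · intro j hj
      apply GG_zero' μ hμ D q
      · omega
      · rw [Nat.succ_mul]; omega

lemma PP_all (μ m z : ℕ) (hμ : 0 < μ) (hm : 0 < m) (D : ℕ → Matrix (Fin μ) (Fin μ) F) (x : F)
    (y : Fin ((m + 1) * μ) → F) (hy0 : ∀ r, y r ≠ 0) (hy : Function.Injective y) (β : ℕ)
    (hβ : z = m * β)
    (H : ∀ k < β, ∀ s, ∑ r ∈ Finset.range ((z + 1) * μ),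
      y s ^ (r + 1) * PP μ hμ D x r (k * (m * μ)) (m * μ) = 0) :
    ∀ k < β, ∀ r, PP μ hμ D x r (k * (m * μ)) (m * μ) = 0 := by
  have hd : (m + 1) * μ = m * μ + μ := Nat.succ_mul _ _
  have hmm : m * μ = (m - 1) * μ + μ := by
    obtain ⟨m', rfl⟩ := Nat.exists_eq_add_of_le' hm
    simp [Nat.succ_mul]
  have step : ∀ k < β, (∀ r < k * (m * μ), PP μ hμ D x r (k * (m * μ)) (m * μ) = 0) →
      ∀ r, PP μ hμ D x r (k * (m * μ)) (m * μ) = 0 := by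
    intro k hk hlow
    have hhigh : ∀ r, k * (m * μ) + (m + 1) * μ ≤ r →
        PP μ hμ D x r (k * (m * μ)) (m * μ) = 0 := by
      intro r hr
      apply PP_zero
      intro j hj
      apply GG_zero' μ hμ D (k * m + m)
      · calc k * (m * μ) + j < k * (m * μ) + m * μ := by omega
          _ = _ := by ring
      · calc (k * m + m + 1) * μ = k * (m * μ) + (m + 1) * μ := by ring
          _ ≤ r := hr
    have hbound : k * (m * μ) + (m + 1) * μ ≤ (z + 1) * μ := by
      have : (k + 1) * (m * μ) ≤ β * (m * μ) := Nat.mul_le_mul_right _ hk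
      subst hβ
      calc k * (m * μ) + (m + 1) * μ = (k + 1) * (m * μ) + μ := by ring
        _ ≤ β * (m * μ) + μ := by omega
        _ = _ := by ring
    obtain ⟨w, hw⟩ := Nat.exists_eq_add_of_le hbound
    have hmid : (fun j : Fin ((m + 1) * μ) =>
        PP μ hμ D x (k * (m * μ) + j) (k * (m * μ)) (m * μ)) = 0 := by
      apply Matrix.eq_zero_of_forall_index_sum_pow_mul_eq_zero hy
      intro s
      have h := H k hk s
      rw [hw, Finset.sum_range_add, Finset.sum_range_add] at h
      rw [Finset.sum_eq_zero (s := Finset.range (k * (m * μ)))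
          (fun r hr => by rw [hlow r (Finset.mem_range.1 hr), mul_zero]),
        Finset.sum_eq_zero (s := Finset.range w)
          (fun r _ => by rw [hhigh _ (Nat.le_add_right _ _), mul_zero]),
        zero_add, add_zero, Finset.sum_range] at h
      have h2 : y s ^ (k * (m * μ) + 1) * ∑ i : Fin ((m + 1) * μ), y s ^ (i : ℕ) *
          PP μ hμ D x (k * (m * μ) + i) (k * (m * μ)) (m * μ) = 0 := by
        rw [← h, Finset.mul_sum]
        apply Finset.sum_congr rfl
        intro i _
        ring
      exact (mul_eq_zero.1 h2).resolve_left (pow_ne_zero _ (hy0 s))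
    intro r
    by_cases h1 : r < k * (m * μ)
    · exact hlow r h1
    by_cases h2 : k * (m * μ) + (m + 1) * μ ≤ r
    · exact hhigh r h2
    have h3 := congrFun hmid ⟨r - k * (m * μ), by omega⟩
    simp only [Pi.zero_apply] at h3
    rwa [show k * (m * μ) + (r - k * (m * μ)) = r by omega] at h3
  intro k
  induction k with
  | zero =>
    intro hk
    apply step 0 hk
    intro r hr
    simp at hr
  | succ k ih =>
    intro hk
    apply step _ hk
    intro r hr
    have hq : k * (m * μ) + m * μ = (k * m + (m - 1)) * μ + μ := by
      rw [Nat.add_mul, add_assoc, ← hmm]; ring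
    have e1 : (k + 1) * (m * μ) = (k * m + (m - 1)) * μ + μ := by rw [← hq]; ring
    have h1 := PP_next μ hμ D x (k * (m * μ)) (m * μ) _ hq (by omega) (ih (by omega)) r
      (by omega)
    rw [show PP μ hμ D x r ((k + 1) * (m * μ)) (m * μ)
      = PP μ hμ D x r ((k + 1) * (m * μ)) (μ + (m - 1) * μ) by rw [hmm, add_comm μ], PP_add, e1, h1,
      zero_add]
    apply PP_zero
    intro j hj
    apply GG_zero μ hμ D (k * m + (m - 1) + 1)
    · rw [Nat.succ_mul]; omega
    · rw [Nat.succ_mul, Nat.succ_mul]; omega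

lemma dataMatrix_sub (z μ : ℕ) (hμ : 0 < μ) (S S' D : ℕ → Matrix (Fin μ) (Fin μ) F)
    (hD : ∀ t, 1 ≤ t → t ≤ 2 * z → D t = S t - S' t) (r : Fin ((z + 1) * μ)) (c : Fin (z * μ)) :
    dataMatrix z μ hμ S r c - dataMatrix z μ hμ S' r c = GG μ hμ D r c := by
  have hc : c.val / μ < z := (Nat.div_lt_iff_lt_mul hμ).2 c.isLt
  unfold dataMatrix GG
  simp only [Matrix.of_apply]
  split_ifs
  · rw [hD _ (by omega) (by omega)]; rfl
  · rw [hD _ (by omega) (by omega)]; rfl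
  · rw [hD _ (by omega) (by omega)]; rfl
  · simp

lemma stored_sub (z μ : ℕ) (hμ : 0 < μ) (S S' D : ℕ → Matrix (Fin μ) (Fin μ) F)
    (hD : ∀ t, 1 ≤ t → t ≤ 2 * z → D t = S t - S' t) (x : F) (c : Fin (z * μ)) :
    stored z μ hμ S x c - stored z μ hμ S' x c
      = ∑ r ∈ Finset.range ((z + 1) * μ), x ^ (r + 1) * GG μ hμ D r c := by
  unfold stored psiVec
  simp only [Matrix.vecMul, dotProduct]
  rw [← Finset.sum_sub_distrib, Finset.sum_range]
  apply Finset.sum_congr rfl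
  intro r _
  rw [← mul_sub, dataMatrix_sub z μ hμ S S' D hD]

lemma repair_sub (z μ m k : ℕ) (hμ : 0 < μ) (hm : 0 < m) (hi1 : 1 ≤ k + 1) (hiz : k + 1 ≤ z / m)
    (hdvd : m ∣ z) (S S' D : ℕ → Matrix (Fin μ) (Fin μ) F)
    (hD : ∀ t, 1 ≤ t → t ≤ 2 * z → D t = S t - S' t) (y x : F) :
    repairSym z μ m (k + 1) hμ hm hi1 hiz hdvd S y x
      - repairSym z μ m (k + 1) hμ hm hi1 hiz hdvd S' y x
      = ∑ r ∈ Finset.range ((z + 1) * μ),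
        y ^ (r + 1) * PP μ hμ D x r (k * (m * μ)) (m * μ) := by
  unfold repairSym xSeg psiSeg PP
  simp only [Finset.mul_sum]
  rw [← Finset.sum_sub_distrib, Finset.sum_comm, Finset.sum_range]
  apply Finset.sum_congr rfl
  intro a _
  rw [← sub_mul, stored_sub z μ hμ S S' D hD, Finset.sum_mul]
  apply Finset.sum_congr rfl
  intro r _
  simp only [Nat.add_sub_cancel]
  ring

end Helpers

/-- exact bandwidth-adaptive repair, Theorem 3: if two families of
symmetric source matrices produce identical repair symbols `r_i(h, f)`, for all helpers
`h` in a set `H` of `d = (m+1)μ` nodes not containing `f` and all `1 ≤ i ≤ β = z/m`,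
then they produce the same content on node `f`: the content `x_f` of the failed node is
uniquely determined by the `β` repair symbols received from each of the `d` helpers. -/
theorem exact_repair_unique {F : Type*} [Field F] (μ z m n : ℕ) (hμ : 0 < μ)
    (hz : 0 < z) (hm : 0 < m) (hdvd : m ∣ z) (hn : 0 < n)
    (e : Fin n → F) (he : ∀ j, e j ≠ 0) (heinj : Function.Injective e)
    (f : Fin n) (ℓ : Fin ((m + 1) * μ) → Fin n) (hℓ : Function.Injective ℓ)
    (hℓf : ∀ r, ℓ r ≠ f)
    (S S' : ℕ → Matrix (Fin μ) (Fin μ) F)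
    (hS : ∀ t, 1 ≤ t → t ≤ 2 * z → (S t).IsSymm)
    (hS' : ∀ t, 1 ≤ t → t ≤ 2 * z → (S' t).IsSymm)
    (hrep : ∀ i, ∀ hi1 : 1 ≤ i, ∀ hiz : i ≤ z / m, ∀ r : Fin ((m + 1) * μ),
      repairSym z μ m i hμ hm hi1 hiz hdvd S (e (ℓ r)) (e f)
        = repairSym z μ m i hμ hm hi1 hiz hdvd S' (e (ℓ r)) (e f)) :
    stored z μ hμ S (e f) = stored z μ hμ S' (e f) := by
  classical
  obtain ⟨β, hβ⟩ := hdvd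
  have hzm : z / m = β := by rw [hβ, Nat.mul_div_cancel_left _ hm]
  let D : ℕ → Matrix (Fin μ) (Fin μ) F :=
    fun t => if 1 ≤ t ∧ t ≤ 2 * z then S t - S' t else 0
  have hD : ∀ t, 1 ≤ t → t ≤ 2 * z → D t = S t - S' t := fun t h1 h2 => if_pos ⟨h1, h2⟩
  have hDs : ∀ t, (D t).IsSymm := by
    intro t
    by_cases h : 1 ≤ t ∧ t ≤ 2 * z
    · rw [hD t h.1 h.2]
      exact (hS t h.1 h.2).sub (hS' t h.1 h.2)
    · have : D t = 0 := if_neg h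
      rw [this]; exact Matrix.isSymm_zero
  have hall := PP_all μ m z hμ hm D (e f) (fun r => e (ℓ r)) (fun r => he _)
    (heinj.comp hℓ) β hβ (by
      intro k hk s
      rw [← repair_sub z μ m k hμ hm (by omega) (by omega) ⟨β, hβ⟩ S S' D hD]
      exact sub_eq_zero.2 (hrep _ _ _ _))
  have hmm : m * μ = (m - 1) * μ + μ := by
    obtain ⟨m', rfl⟩ := Nat.exists_eq_add_of_le' hm
    simp [Nat.succ_mul]
  have hsum : ∀ c k, k ≤ β → PP μ hμ D (e f) c 0 (k * (m * μ)) = 0 := by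
    intro c k
    induction k with
    | zero => intro _; simp [PP]
    | succ k ih =>
      intro hk
      rw [Nat.succ_mul, PP_add, ih (by omega), zero_add, zero_add]
      exact hall k (by omega) c
  obtain ⟨b, rfl⟩ : ∃ b, β = b + 1 := by
    cases β with
    | zero => omega
    | succ b => exact ⟨b, rfl⟩
  funext c
  apply sub_eq_zero.1
  rw [stored_sub z μ hμ S S' D hD]
  have hzμ : z * μ = (b + 1) * (m * μ) := by rw [hβ]; ring
  have hq : b * (m * μ) + m * μ = (b * m + (m - 1)) * μ + μ := by
    rw [Nat.add_mul, add_assoc, ← hmm]; ring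
  have e1 : z * μ = (b * m + (m - 1)) * μ + μ := by rw [← hq, hzμ]; ring
  have hlast := PP_next μ hμ D (e f) (b * (m * μ)) (m * μ) _ hq (by omega)
    (hall b (by omega)) c.val (by have := c.isLt; omega)
  have hfin : PP μ hμ D (e f) c.val 0 ((z + 1) * μ) = 0 := by
    generalize c.val = c' at hlast
    rw [← e1] at hlast
    rw [Nat.succ_mul, PP_add, zero_add, hlast, hzμ, hsum _ _ le_rfl, add_zero]
  rw [← hfin]
  unfold PP
  apply Finset.sum_congr rfl
  intro r _
  rw [zero_add, GG_symm μ hμ D hDs, mul_comm]
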